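/- Let n ≥ 2 and let t > 0 be a real number. The set of extreme points of the flow polytope F_n(t, 0, …, 0, −t) has exactly 2^{n−1} elements, and its average (1/2^{n−1}) · ∑_{v extreme} v is the flow f given by: f_{0,n} = t·2^{−(n−1)}; f_{0,j} = t·2^{−j} for 1 ≤ j ≤ n−1; f_{i,n} = t·2^{−(n−i)} for 1 ≤ i ≤ n−1; and f_{i,j} = t·2^{−(j−i+1)} for 1 ≤ i < j ≤ n−1. -/

import Mathlib

open Finset

/-- The entropy-like function `h(t) = (t+1)·log(t+1) − t·log t` (with `h 0 = 0`
since `Real.log 0 = 0`). -/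
noncomputable def entH (t : ℝ) : ℝ := (t + 1) * Real.log (t + 1) - t * Real.log t

/-- `f` is an integer flow on the complete graph `k_{n+1}` with netflow `N`:
`f i j` is the flow on the edge `(i,j)` for `i < j`, it vanishes for `i ≥ j`,
and the netflow at each vertex `i` is `N i`. -/
def IsIntFlow (n : ℕ) (N : Fin (n + 1) → ℤ) (f : Fin (n + 1) → Fin (n + 1) → ℕ) : Prop :=
  (∀ i j : Fin (n + 1), ¬ i < j → f i j = 0) ∧
  ∀ i : Fin (n + 1),
    (∑ j : Fin (n + 1), if i < j then (f i j : ℤ) else 0) -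
      (∑ k : Fin (n + 1), if k < i then (f k i : ℤ) else 0) = N i

/-- The Kostant partition function: the number of integer flows on the complete
graph `k_{n+1}` with netflow `N`. -/
noncomputable def Kn (n : ℕ) (N : Fin (n + 1) → ℤ) : ℕ :=
  Nat.card {f : Fin (n + 1) → Fin (n + 1) → ℕ // IsIntFlow n N f}

/-- The flow polytope of the complete graph `k_{n+1}` with netflow `N`. -/
def FlowPolytope (n : ℕ) (N : Fin (n + 1) → ℝ) : Set (Fin (n + 1) → Fin (n + 1) → ℝ) :=
  {f | (∀ i j : Fin (n + 1), i < j → 0 ≤ f i j) ∧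
    (∀ i j : Fin (n + 1), ¬ i < j → f i j = 0) ∧
    ∀ i : Fin (n + 1),
      (∑ j : Fin (n + 1), if i < j then f i j else 0) -
        (∑ k : Fin (n + 1), if k < i then f k i else 0) = N i}

/-- The flow entropy `H(f)`. -/
noncomputable def flowEntropy (n : ℕ) (N : Fin (n + 1) → ℝ)
    (f : Fin (n + 1) → Fin (n + 1) → ℝ) : ℝ :=
  (∑ i : Fin (n + 1), ∑ j : Fin (n + 1), if i < j then entH (f i j) else 0) +
  ∑ j : Fin (n + 1), if 0 < (j : ℕ) ∧ (j : ℕ) < n then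
    entH (∑ i : Fin (n + 1), if i < j then (N i - f i j) else 0) else 0

/-- Partial sums `s_k = N_0 + ⋯ + N_k`. -/
def sPartial (n : ℕ) (N : Fin (n + 1) → ℤ) (k : ℕ) : ℤ :=
  ∑ j : Fin (n + 1), if (j : ℕ) ≤ k then N j else 0

/-- Extend `(N_0,…,N_{n−1})` to the netflow vector `(N_0,…,N_{n−1},−∑ N_i)`. -/
def extend (n : ℕ) (N : Fin n → ℤ) : Fin (n + 1) → ℤ := Fin.snoc N (-∑ i, N i)

/-!
The vertices of a polyhedron are its points of minimal support. On the complete graph, following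
the positive edges of a flow out of the source leads to the sink, so a flow of minimal support is
carried by one path from `0` to `n`; conversely netflow determines a flow carried by a path. A path
is the set `T ∋ 0, n` of the vertices it visits, and it uses the edge `(i, j)` iff `i, j ∈ T` and
`T` misses everything in between. Thus `(i, j)` prescribes the membership in `T` of exactly the
vertices in `[i, j] \ {0, n}`, and a uniformly random path uses it with probability
`2 ^ (-#([i, j] \ {0, n}))`.
-/

section Polyhedron

variable {𝕜 E ι : Type*} [Field 𝕜] [LinearOrder 𝕜] [IsStrictOrderedRing 𝕜] [AddCommGroup E]
  [Module 𝕜 E] [Finite ι]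

lemma exists_pos_forall_mul_le {a b : ι → 𝕜} (ha : ∀ k, 0 ≤ a k)
    (hab : ∀ k, a k = 0 → b k = 0) : ∃ ε > 0, ∀ k, ε * b k ≤ a k := by
  obtain ⟨M, hM⟩ := Finite.exists_le fun k => b k / a k
  refine ⟨(max M 1)⁻¹, by positivity, fun k => (inv_mul_le_iff₀ (by positivity)).2 ?_⟩
  obtain hk | hk := (ha k).eq_or_lt
  · simp [← hk, hab k hk.symm]
  · exact (div_le_iff₀ hk).1 ((hM k).trans (le_max_left _ _))

theorem mem_extremePoints_polyhedron_iff (S : AffineSubspace 𝕜 E) (φ : ι → E →ᵃ[𝕜] 𝕜) {x : E} :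
    x ∈ Set.extremePoints 𝕜 {y | y ∈ S ∧ ∀ k, 0 ≤ φ k y} ↔
      (x ∈ S ∧ ∀ k, 0 ≤ φ k x) ∧
        ∀ y ∈ S, (∀ k, 0 ≤ φ k y) → (∀ k, φ k x = 0 → φ k y = 0) → y = x := by
  rw [mem_extremePoints_iff_left]
  refine and_congr_right fun ⟨hxS, hx⟩ =>
    ⟨fun hext y hyS hy hxy => ?_, fun hmin y hy z hz hseg => ?_⟩
  · obtain ⟨ε, hε, hεy⟩ := exists_pos_forall_mul_le hx hxy
    -- The segment from `y` to `x` can be prolonged slightly beyond `x`.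
    have hz (k : ι) : 0 ≤ φ k (AffineMap.lineMap y x (1 + ε)) := by
      rw [AffineMap.apply_lineMap, AffineMap.lineMap_apply_ring']
      linarith [hεy k, mul_nonneg hε.le (hx k)]
    refine hext y ⟨hyS, hy⟩ _ ⟨AffineMap.lineMap_mem (1 + ε) hyS hxS, hz⟩ ?_
    rw [openSegment_eq_image_lineMap]
    refine ⟨(1 + ε)⁻¹, ⟨by positivity, inv_lt_one_of_one_lt₀ (lt_add_of_pos_right 1 hε)⟩, ?_⟩
    rw [AffineMap.lineMap_lineMap_right, inv_mul_cancel₀ (by positivity),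
      AffineMap.lineMap_apply_one]
  · obtain ⟨a, b, ha, hb, hab, rfl⟩ := hseg
    refine hmin y hy.1 hy.2 fun k hk => ?_
    rw [Convex.combo_affine_apply hab, smul_eq_mul, smul_eq_mul] at hk
    have := (add_eq_zero_iff_of_nonneg (mul_nonneg ha.le (hy.2 k)) (mul_nonneg hb.le (hz.2 k))).1 hk
    exact (mul_eq_zero.1 this.1).resolve_left ha.ne'

end Polyhedron

section Consecutive

variable {α : Type*} [LinearOrder α]

/-- `i < j` are neighbours in the increasing enumeration of `T`: they form an edge of the path that
visits the vertices in `T` in increasing order. -/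
def IsConsecutive (T : Finset α) (i j : α) : Prop :=
  i ∈ T ∧ j ∈ T ∧ i < j ∧ ∀ k ∈ T, k ≤ i ∨ j ≤ k

instance (T : Finset α) (i j : α) : Decidable (IsConsecutive T i j) :=
  inferInstanceAs (Decidable (_ ∧ _))

namespace IsConsecutive

variable {T : Finset α} {i j k : α}

lemma lt (h : IsConsecutive T i j) : i < j := h.2.2.1

lemma right_unique (hj : IsConsecutive T i j) (hk : IsConsecutive T i k) : j = k := by
  grind [IsConsecutive]

lemma left_unique (hi : IsConsecutive T i k) (hj : IsConsecutive T j k) : i = j := by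
  grind [IsConsecutive]

lemma exists_right (hi : i ∈ T) (hk : k ∈ T) (hik : i < k) : ∃ j, IsConsecutive T i j := by
  obtain ⟨j, hj, hmin⟩ := {l ∈ T | i < l}.exists_min_image id ⟨k, by simp [hk, hik]⟩
  simp only [mem_filter, and_imp, id] at hj hmin
  exact ⟨j, by grind [IsConsecutive]⟩

lemma exists_left (hk : k ∈ T) (hj : j ∈ T) (hkj : k < j) : ∃ i, IsConsecutive T i j := by
  obtain ⟨i, hi, hmax⟩ := {l ∈ T | l < j}.exists_max_image id ⟨k, by simp [hk, hkj]⟩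
  simp only [mem_filter, and_imp, id] at hi hmax
  exact ⟨i, by grind [IsConsecutive]⟩

lemma of_insert {a b : α} (hj : IsLeast (T : Set α) j) (hij : i < j)
    (h : IsConsecutive (insert i T) a b) : (a = i ∧ b = j) ∨ IsConsecutive T a b := by
  have hjT : j ∈ T := hj.1
  have hle : ∀ k ∈ T, j ≤ k := fun k hk => hj.2 hk
  grind [IsConsecutive]

end IsConsecutive

lemma exists_isLeast_forall_isConsecutive [OrderTop α] [WellFoundedGT α] {p : α → Prop}
    {r : α → α → Prop} (hstep : ∀ i, p i → i ≠ ⊤ → ∃ j, i < j ∧ r i j ∧ p j) {i : α}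
    (hi : p i) :
    ∃ T : Finset α, IsLeast (T : Set α) i ∧ ⊤ ∈ T ∧ ∀ a b, IsConsecutive T a b → r a b := by
  induction i using WellFoundedGT.induction with
  | ind i ih =>
    obtain rfl | hi_top := eq_or_ne i ⊤
    · exact ⟨{⊤}, by simp, by simp, fun a b h => by grind [IsConsecutive]⟩
    · obtain ⟨j, hij, hr, hj⟩ := hstep i hi hi_top
      obtain ⟨T, hTj, hT_top, hTr⟩ := ih j hij hj
      refine ⟨insert i T, ?_, mem_insert_of_mem hT_top, fun a b hab => ?_⟩
      · simpa [hij.le] using hTj.insert i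
      · obtain ⟨rfl, rfl⟩ | hab := hab.of_insert hTj hij
        exacts [hr, hTr a b hab]

/-- The flow that sends `t` along the path visiting the vertices in `T` in increasing order. -/
def pathFlow (t : ℝ) (T : Finset α) (i j : α) : ℝ := if IsConsecutive T i j then t else 0

lemma sum_pathFlow_right [Fintype α] [OrderTop α] (t : ℝ) {T : Finset α} (hT : ⊤ ∈ T) (i : α) :
    ∑ j, pathFlow t T i j = if i ∈ T ∧ i ≠ ⊤ then t else 0 := by
  split_ifs with hi
  · obtain ⟨j, hj⟩ := IsConsecutive.exists_right hi.1 hT hi.2.lt_top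
    have hiff (k : α) : IsConsecutive T i k ↔ j = k := ⟨hj.right_unique, fun h => h ▸ hj⟩
    simp [pathFlow, hiff]
  · exact sum_eq_zero fun j _ => if_neg fun hij => hi ⟨hij.1, hij.lt.ne_top⟩

lemma sum_pathFlow_left [Fintype α] [OrderBot α] (t : ℝ) {T : Finset α} (hT : ⊥ ∈ T) (j : α) :
    ∑ i, pathFlow t T i j = if j ∈ T ∧ j ≠ ⊥ then t else 0 := by
  split_ifs with hj
  · obtain ⟨i, hi⟩ := IsConsecutive.exists_left hT hj.1 hj.2.bot_lt
    have hiff (k : α) : IsConsecutive T k j ↔ i = k := ⟨hi.left_unique, fun h => h ▸ hi⟩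
    simp [pathFlow, hiff]
  · exact sum_eq_zero fun i _ => if_neg fun hij => hj ⟨hij.2.1, hij.lt.ne_bot⟩

lemma pathFlow_injOn [OrderTop α] {t : ℝ} (ht : t ≠ 0) :
    Set.InjOn (pathFlow t) {T : Finset α | ⊤ ∈ T} := by
  have hmem {T : Finset α} (hT : ⊤ ∈ T) (i : α) :
      i ∈ T ↔ i = ⊤ ∨ ∃ j, pathFlow t T i j ≠ 0 := by
    refine ⟨fun hi => or_iff_not_imp_left.2 fun hi_top => ?_, ?_⟩
    · obtain ⟨j, hj⟩ := IsConsecutive.exists_right hi hT (Ne.lt_top hi_top)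
      exact ⟨j, by simpa [pathFlow, hj] using ht⟩
    · rintro (rfl | ⟨j, hj⟩)
      · exact hT
      · exact (ite_ne_right_iff.1 hj).1.1
  intro T hT U hU h
  ext i
  rw [hmem hT, hmem hU, h]

end Consecutive

section Counting

lemma card_filter_subset_disjoint {α : Type*} [Fintype α] [DecidableEq α] {A B : Finset α}
    (hAB : Disjoint A B) : #{T : Finset α | A ⊆ T ∧ Disjoint T B} = 2 ^ #(A ∪ B)ᶜ := by
  have hIcc : ({T | A ⊆ T ∧ Disjoint T B} : Finset (Finset α)) = Icc A Bᶜ := by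
    ext T
    simp [subset_compl_iff_disjoint_right]
  have hA : A ⊆ Bᶜ := subset_compl_iff_disjoint_right.2 hAB
  rw [hIcc, card_Icc_finset hA, ← card_sdiff_of_subset hA, compl_union, sdiff_eq_inter_compl,
    inter_comm]

variable (α : Type*) [LinearOrder α] [Fintype α] [BoundedOrder α]

/-- The vertex sets of the increasing paths from `⊥` to `⊤`. -/
def pathSets : Finset (Finset α) := {T | ⊥ ∈ T ∧ ⊤ ∈ T}

variable {α}

lemma mem_pathSets {T : Finset α} : T ∈ pathSets α ↔ ⊥ ∈ T ∧ ⊤ ∈ T := by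
  simp [pathSets]

variable (α) in
lemma card_pathSets : #(pathSets α) = 2 ^ #({⊥, ⊤} : Finset α)ᶜ := by
  simpa [pathSets, insert_subset_iff] using
    card_filter_subset_disjoint (disjoint_empty_right ({⊥, ⊤} : Finset α))

variable [LocallyFiniteOrder α]

lemma card_filter_isConsecutive {i j : α} (hij : i < j) :
    #{T ∈ pathSets α | IsConsecutive T i j} = 2 ^ #({⊥, ⊤} ∪ Icc i j)ᶜ := by
  have hdisj : Disjoint ({⊥, ⊤, i, j} : Finset α) (Ioo i j) := by
    simp
  have hunion : ({⊥, ⊤, i, j} : Finset α) ∪ Ioo i j = {⊥, ⊤} ∪ Icc i j := by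
    ext k
    grind
  rw [← hunion, ← card_filter_subset_disjoint hdisj]
  congr 1
  ext T
  simp only [mem_filter, mem_pathSets, mem_univ, true_and, insert_subset_iff,
    singleton_subset_iff, disjoint_left, mem_Ioo]
  grind [IsConsecutive]

lemma average_pathFlow (t : ℝ) (i j : α) :
    (#(pathSets α) : ℝ)⁻¹ * ∑ T ∈ pathSets α, pathFlow t T i j =
      if i < j then t * 2 ^ (-#(Icc i j \ {⊥, ⊤}) : ℤ) else 0 := by
  split_ifs with hij
  · have hcard : #({⊥, ⊤} : Finset α)ᶜ = #({⊥, ⊤} ∪ Icc i j)ᶜ + #(Icc i j \ {⊥, ⊤}) := by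
      rw [compl_union, ← sdiff_eq_inter_compl, sdiff_eq_inter_compl (Icc i j),
        inter_comm (Icc i j), card_sdiff_add_card_inter]
    have hsum : ∑ T ∈ pathSets α, pathFlow t T i j = 2 ^ #({⊥, ⊤} ∪ Icc i j)ᶜ * t := by
      simp only [pathFlow]
      rw [← sum_filter, sum_const, nsmul_eq_mul, card_filter_isConsecutive hij]
      push_cast
      rfl
    rw [hsum, card_pathSets, hcard, zpow_neg, zpow_natCast]
    push_cast
    rw [pow_add]
    field_simp
  · have hzero (T : Finset α) : pathFlow t T i j = 0 := if_neg fun h => hij h.lt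
    simp only [hzero, sum_const_zero, mul_zero]

end Counting

section Flow

variable {n : ℕ} {N : Fin (n + 1) → ℝ} {f : Fin (n + 1) → Fin (n + 1) → ℝ}

/-- The affine space of signed flows with netflow `N`: the equations, without the inequalities, of
the flow polytope. -/
def flowSpace (n : ℕ) (N : Fin (n + 1) → ℝ) :
    AffineSubspace ℝ (Fin (n + 1) → Fin (n + 1) → ℝ) where
  carrier := {f | (∀ i j, ¬ i < j → f i j = 0) ∧ ∀ i, ∑ j, f i j - ∑ k, f k i = N i}
  smul_vsub_vadd_mem' c f g h hf hg hh := by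
    refine ⟨fun i j hij => ?_, fun i => ?_⟩
    · simp [hf.1 i j hij, hg.1 i j hij, hh.1 i j hij]
    · simp only [vsub_eq_sub, vadd_eq_add, Pi.add_apply, Pi.smul_apply, Pi.sub_apply, smul_eq_mul,
        sum_add_distrib, ← mul_sum, sum_sub_distrib]
      linear_combination c * hf.2 i - c * hg.2 i + hh.2 i

namespace FlowPolytope

lemma mem_iff : f ∈ FlowPolytope n N ↔ f ∈ flowSpace n N ∧ ∀ i j, 0 ≤ f i j := by
  have hout (h : ∀ i j, ¬ i < j → f i j = 0) (i : Fin (n + 1)) :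
      (∑ j, if i < j then f i j else 0) = ∑ j, f i j :=
    sum_congr rfl fun j _ => ite_eq_left_iff.2 fun hij => (h i j hij).symm
  have hin (h : ∀ i j, ¬ i < j → f i j = 0) (i : Fin (n + 1)) :
      (∑ k, if k < i then f k i else 0) = ∑ k, f k i :=
    sum_congr rfl fun k _ => ite_eq_left_iff.2 fun hki => (h k i hki).symm
  constructor
  · rintro ⟨hpos, hzero, hnet⟩
    refine ⟨⟨hzero, fun i => by rw [← hnet i, hout hzero, hin hzero]⟩, fun i j => ?_⟩
    by_cases hij : i < j
    exacts [hpos i j hij, (hzero i j hij).ge]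
  · rintro ⟨⟨hzero, hnet⟩, hpos⟩
    exact ⟨fun i j _ => hpos i j, hzero, fun i => by rw [hout hzero, hin hzero, hnet]⟩

theorem mem_extremePoints_iff :
    f ∈ Set.extremePoints ℝ (FlowPolytope n N) ↔ f ∈ FlowPolytope n N ∧
      ∀ g ∈ FlowPolytope n N, (∀ i j, f i j = 0 → g i j = 0) → g = f := by
  have h := mem_extremePoints_polyhedron_iff (x := f) (flowSpace n N)
    fun p : Fin (n + 1) × Fin (n + 1) => (LinearMap.proj (R := ℝ) (φ := fun _ => ℝ) p.2 ∘ₗ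
      LinearMap.proj p.1).toAffineMap
  have hset : FlowPolytope n N = {g | g ∈ flowSpace n N ∧ ∀ i j, 0 ≤ g i j} :=
    Set.ext fun g => mem_iff
  rw [hset]
  simp only [Prod.forall] at h
  exact h.trans (by simp)

/-- Going through the vertices in increasing order, the inflow of a vertex determines the flow on
the only edge that leaves it. -/
lemma eq_of_isConsecutive {T : Finset (Fin (n + 1))} {g : Fin (n + 1) → Fin (n + 1) → ℝ}
    (hf : f ∈ flowSpace n N) (hg : g ∈ flowSpace n N)
    (hfT : ∀ i j, ¬ IsConsecutive T i j → f i j = 0)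
    (hgT : ∀ i j, ¬ IsConsecutive T i j → g i j = 0) : f = g := by
  suffices h : ∀ i j, f i j = g i j from funext₂ h
  intro i
  induction i using WellFoundedLT.induction with
  | ind i ih =>
    intro j
    by_cases hij : IsConsecutive T i j
    · have hout {e : Fin (n + 1) → Fin (n + 1) → ℝ}
          (he : ∀ i j, ¬ IsConsecutive T i j → e i j = 0) : ∑ k, e i k = e i j :=
        sum_eq_single_of_mem j (mem_univ j) fun k _ hk => he i k fun h => hk (h.right_unique hij)
      have hin : ∑ k, f k i = ∑ k, g k i := by
        refine sum_congr rfl fun k _ => ?_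
        by_cases hki : k < i
        exacts [ih k hki i, by rw [hf.1 k i hki, hg.1 k i hki]]
      linear_combination hf.2 i - hg.2 i - hout hfT + hout hgT + hin
    · rw [hfT i j hij, hgT i j hij]

lemma pathFlow_mem {t : ℝ} (ht : 0 ≤ t) {T : Finset (Fin (n + 1))}
    (hT : T ∈ pathSets (Fin (n + 1))) :
    pathFlow t T ∈ FlowPolytope n (Pi.single ⊥ t - Pi.single ⊤ t) := by
  obtain ⟨hbot, htop⟩ := mem_pathSets.1 hT
  refine mem_iff.2 ⟨⟨fun i j hij => if_neg fun h => hij h.lt, fun i => ?_⟩, fun i j => ?_⟩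
  · rw [sum_pathFlow_right t htop, sum_pathFlow_left t hbot, Pi.sub_apply, Pi.single_apply,
      Pi.single_apply]
    grind
  · exact ite_nonneg ht le_rfl

lemma exists_pos_path (hf : f ∈ FlowPolytope n N) (hN : ∀ i, i ≠ ⊤ → 0 ≤ N i)
    {i : Fin (n + 1)} (hi : i ≠ ⊤ → 0 < N i) :
    ∃ T : Finset (Fin (n + 1)), i ∈ T ∧ ⊤ ∈ T ∧ ∀ a b, IsConsecutive T a b → 0 < f a b := by
  obtain ⟨⟨hzero, hnet⟩, hpos⟩ := mem_iff.1 hf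
  have hstep (a : Fin (n + 1)) (ha : a ≠ ⊤ → 0 < ∑ j, f a j) (ha_top : a ≠ ⊤) :
      ∃ b, a < b ∧ 0 < f a b ∧ (b ≠ ⊤ → 0 < ∑ j, f b j) := by
    obtain ⟨b, -, hb⟩ := (sum_pos_iff_of_nonneg fun j _ => hpos a j).1 (ha ha_top)
    refine ⟨b, not_imp_comm.1 (hzero a b) hb.ne', hb, fun hb_top => ?_⟩
    have hin : f a b ≤ ∑ k, f k b := single_le_sum (fun k _ => hpos k b) (mem_univ a)
    linarith [hnet b, hN b hb_top]
  have hout (hi_top : i ≠ ⊤) : 0 < ∑ j, f i j := by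
    have hin : 0 ≤ ∑ k, f k i := sum_nonneg fun k _ => hpos k i
    linarith [hnet i, hi hi_top]
  obtain ⟨T, hTi, hT_top, hT⟩ := exists_isLeast_forall_isConsecutive hstep hout
  exact ⟨T, hTi.1, hT_top, hT⟩

theorem extremePoints_single_sub_single {t : ℝ} (ht : 0 < t) :
    Set.extremePoints ℝ (FlowPolytope n (Pi.single ⊥ t - Pi.single ⊤ t)) =
      pathFlow t '' pathSets (Fin (n + 1)) := by
  ext f
  rw [mem_extremePoints_iff]
  constructor
  · rintro ⟨hf, hmin⟩
    obtain ⟨T, hbot, htop, hT⟩ := exists_pos_path hf (i := ⊥)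
      (fun i hi => by grind [Pi.sub_apply]) (fun h => by simp [h, ht])
    have hTmem := mem_pathSets.2 ⟨hbot, htop⟩
    exact ⟨T, hTmem, hmin _ (pathFlow_mem ht.le hTmem) fun i j hij =>
      if_neg fun h => (hT i j h).ne' hij⟩
  · rintro ⟨T, hT, rfl⟩
    have hmem := pathFlow_mem ht.le hT
    refine ⟨hmem, fun g hg hsupp => ?_⟩
    exact eq_of_isConsecutive (mem_iff.1 hg).1 (mem_iff.1 hmem).1
      (fun i j hij => hsupp i j (if_neg hij)) (fun i j hij => if_neg hij)

end FlowPolytope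

lemma ite_eq_single_sub_single (hn : n ≠ 0) (t : ℝ) :
    (fun i : Fin (n + 1) => if (i : ℕ) = 0 then t else if (i : ℕ) = n then -t else 0) =
      Pi.single ⊥ t - Pi.single ⊤ t := by
  ext i
  simp only [Pi.sub_apply, Pi.single_apply, Fin.ext_iff, bot_eq_zero, Fin.top_eq_last,
    Fin.val_zero, Fin.val_last]
  grind

lemma card_pathSets_fin (hn : n ≠ 0) : #(pathSets (Fin (n + 1))) = 2 ^ (n - 1) := by
  have hbot_ne_top : (⊥ : Fin (n + 1)) ≠ ⊤ := by
    simpa [Fin.ext_iff, bot_eq_zero, Fin.top_eq_last] using hn.symm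
  rw [card_pathSets, card_compl, card_pair hbot_ne_top, Fintype.card_fin,
    Nat.add_sub_add_right n 1 1]

lemma card_Icc_sdiff_bot_top (i j : Fin (n + 1)) :
    #(Icc i j \ {⊥, ⊤}) = min (j + 1 : ℕ) n - max (i : ℕ) 1 := by
  rw [← Nat.card_Ico, ← card_map Fin.valEmbedding]
  congr 1
  ext k
  simp only [mem_map, mem_sdiff, mem_Icc, mem_insert, mem_singleton, Fin.valEmbedding_apply,
    Fin.exists_iff, Fin.le_def, Fin.ext_iff, mem_Ico, bot_eq_zero, Fin.top_eq_last, Fin.val_zero,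
    Fin.val_last]
  have hj := j.is_le
  constructor
  · rintro ⟨l, hl, hlk⟩
    omega
  · intro hk
    exact ⟨k, by omega, by omega⟩

end Flow

/-- **Proposition (average of the vertices of the CRY polytope `F_n(t,0,…,0,−t)`).**
The set of extreme points has exactly `2^{n−1}` elements and its average is the
explicit flow given by `f_{0,n} = t·2^{−(n−1)}`, `f_{0,j} = t·2^{−j}` for
`1 ≤ j ≤ n−1`, `f_{i,n} = t·2^{−(n−i)}` for `1 ≤ i ≤ n−1` and
`f_{i,j} = t·2^{−(j−i+1)}` for `1 ≤ i < j ≤ n−1`. -/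
theorem average_extremePoints_CRY (n : ℕ) (hn : 2 ≤ n) (t : ℝ) (ht : 0 < t) :
    (Set.extremePoints ℝ
        (FlowPolytope n fun i =>
          if (i : ℕ) = 0 then t else if (i : ℕ) = n then -t else 0)).ncard =
      2 ^ (n - 1) ∧
    ((2 ^ (n - 1) : ℝ)⁻¹ •
        ∑ᶠ v ∈ Set.extremePoints ℝ
          (FlowPolytope n fun i =>
            if (i : ℕ) = 0 then t else if (i : ℕ) = n then -t else 0), v) =
      fun (i j : Fin (n + 1)) =>
        if (i : ℕ) = 0 ∧ (j : ℕ) = n then t * (2 : ℝ) ^ (-((n : ℤ) - 1))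
        else if (i : ℕ) = 0 ∧ 1 ≤ (j : ℕ) ∧ (j : ℕ) ≤ n - 1 then
          t * (2 : ℝ) ^ (-((j : ℕ) : ℤ))
        else if (j : ℕ) = n ∧ 1 ≤ (i : ℕ) ∧ (i : ℕ) ≤ n - 1 then
          t * (2 : ℝ) ^ (-((n : ℤ) - ((i : ℕ) : ℤ)))
        else if 1 ≤ (i : ℕ) ∧ (i : ℕ) < (j : ℕ) ∧ (j : ℕ) ≤ n - 1 then
          t * (2 : ℝ) ^ (-(((j : ℕ) : ℤ) - ((i : ℕ) : ℤ) + 1))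
        else 0 := by
  have hn_ne : n ≠ 0 := by omega
  have hinj : Set.InjOn (pathFlow t) (pathSets (Fin (n + 1)) : Set (Finset (Fin (n + 1)))) :=
    (pathFlow_injOn ht.ne').mono fun T hT => (mem_pathSets.1 hT).2
  have hcard : #(pathSets (Fin (n + 1))) = 2 ^ (n - 1) := card_pathSets_fin hn_ne
  rw [ite_eq_single_sub_single hn_ne, FlowPolytope.extremePoints_single_sub_single ht]
  refine ⟨by rw [hinj.ncard_image, Set.ncard_coe_finset, hcard], ?_⟩
  rw [finsum_mem_image hinj, finsum_mem_coe_finset]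
  ext i j
  have haverage := average_pathFlow t i j
  rw [hcard, card_Icc_sdiff_bot_top, Nat.cast_pow, Nat.cast_ofNat] at haverage
  simp only [Pi.smul_apply, Finset.sum_apply, smul_eq_mul, haverage, Fin.lt_def]
  have hi := i.is_le
  have hj := j.is_le
  split_ifs
  all_goals first | omega | (congr 2 <;> omega)
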